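/- arXiv:math/9801023 — 8 statements merged into one kernel-verified Lean document; each statement's English description precedes it below -/
import Mathlib

section
/- The function f is C^∞ on E (ContDiff ℝ ⊤ f), even though the open balls B(s_k, r_k) carrying the summands f_k accumulate at s_∞. -/
/-!
All summands are rescalings of one function about the accumulation point: since the centers are
`s k = c - r k • w` for a fixed `w`, each is a multiple of `φ ((r k)⁻¹ • (x - c))`, where
`φ u = h (u + w)`. Differentiating `j` times costs a factor `(r k)⁻¹ ^ j`, which is unbounded in
`k`. To prove that the product is `C^m`, move a factor `‖x - c‖ ^ (2 * m)` from the flat function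
into the series: `‖x - c‖ ^ (-2 * m) * exp (-1 / ‖x - c‖ ^ 2)` is still smooth, while
`‖x - c‖ ^ (2 * m) • φ ((r k)⁻¹ • (x - c))` equals `r k ^ (2 * m) • ψ ((r k)⁻¹ • (x - c))` with
`ψ u = ‖u‖ ^ (2 * m) • φ u` again a Schwartz function, so the derivatives of the new series up to
order `m` are uniformly summable.
-/

open scoped ContDiff SchwartzMap

section Rescaling

theorem norm_iteratedFDeriv_comp_smul_sub {𝕜 V G : Type*} [NontriviallyNormedField 𝕜]
    [NormedAddCommGroup V] [NormedSpace 𝕜 V] [NormedAddCommGroup G] [NormedSpace 𝕜 G]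
    {f : V → G} {j : ℕ} (hf : ContDiff 𝕜 j f) (ρ : 𝕜) (c x : V) :
    ‖iteratedFDeriv 𝕜 j (fun y ↦ f (ρ • (y - c))) x‖ =
      ‖ρ‖ ^ j * ‖iteratedFDeriv 𝕜 j f (ρ • (x - c))‖ := by
  rw [iteratedFDeriv_comp_sub (f := fun y ↦ f (ρ • y)), iteratedFDeriv_comp_const_smul ρ hf,
    norm_smul, norm_pow]

variable {V G : Type*} [NormedAddCommGroup V] [NormedSpace ℝ V]
  [NormedAddCommGroup G] [NormedSpace ℝ G]

theorem norm_iteratedFDeriv_pow_smul_comp_inv_smul_sub_le (φ : 𝓢(V, G)) {r R : ℝ} (hr : r ≠ 0)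
    (hR : |r| ≤ R) {j p : ℕ} (hjp : j ≤ p) (c x : V) :
    ‖iteratedFDeriv ℝ j (fun y ↦ r ^ p • φ (r⁻¹ • (y - c))) x‖ ≤
      R ^ (p - j) * SchwartzMap.seminorm ℝ 0 j φ := by
  have hφ : ContDiff ℝ j φ := φ.smooth'.of_le (mod_cast le_top)
  have hφ_comp : ContDiff ℝ j fun y ↦ φ (r⁻¹ • (y - c)) := by fun_prop
  have hcancel : |r| ^ p * |r|⁻¹ ^ j = |r| ^ (p - j) := by
    rw [pow_sub₀ _ (abs_ne_zero.2 hr) hjp, inv_pow]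
  calc ‖iteratedFDeriv ℝ j (fun y ↦ r ^ p • φ (r⁻¹ • (y - c))) x‖
      = |r| ^ p * (|r|⁻¹ ^ j * ‖iteratedFDeriv ℝ j φ (r⁻¹ • (x - c))‖) := by
        rw [iteratedFDeriv_const_smul_apply' hφ_comp.contDiffAt, norm_smul,
          norm_iteratedFDeriv_comp_smul_sub hφ, norm_pow, norm_inv, Real.norm_eq_abs]
    _ = |r| ^ (p - j) * ‖iteratedFDeriv ℝ j φ (r⁻¹ • (x - c))‖ := by rw [← mul_assoc, hcancel]
    _ ≤ R ^ (p - j) * SchwartzMap.seminorm ℝ 0 j φ := by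
        have hR_nonneg : 0 ≤ R := (abs_nonneg r).trans hR
        gcongr
        exact φ.norm_iteratedFDeriv_le_seminorm ℝ j _

theorem contDiff_tsum_smul_pow_smul_comp_inv_smul_sub [CompleteSpace G] {ι : Type*} (φ : 𝓢(V, G))
    {a r : ι → ℝ} {R : ℝ} (ha : Summable a) (hr : ∀ i, r i ≠ 0) (hR : ∀ i, |r i| ≤ R)
    {m p : ℕ} (hmp : m ≤ p) (c : V) :
    ContDiff ℝ m fun x ↦ ∑' i, a i • r i ^ p • φ ((r i)⁻¹ • (x - c)) := by
  have hφ : ContDiff ℝ m φ := φ.smooth'.of_le (mod_cast le_top)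
  have hterm (i : ι) : ContDiff ℝ m fun x ↦ r i ^ p • φ ((r i)⁻¹ • (x - c)) := by fun_prop
  refine contDiff_tsum (N := m)
    (v := fun j i ↦ |a i| * (R ^ (p - j) * SchwartzMap.seminorm ℝ 0 j φ))
    (fun i ↦ (hterm i).const_smul (a i)) (fun j _ ↦ ha.abs.mul_right _) fun j i x hj ↦ ?_
  have hterm_j := (hterm i).contDiffAt (x := x) |>.of_le (mod_cast hj : (j : ℕ∞ω) ≤ m)
  rw [iteratedFDeriv_const_smul_apply' hterm_j, norm_smul, Real.norm_eq_abs]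
  gcongr
  exact norm_iteratedFDeriv_pow_smul_comp_inv_smul_sub_le φ (hr i) (hR i)
    ((Nat.cast_le.1 hj).trans hmp) c x

end Rescaling

section FlatFactor

theorem eq_expNegInvGlue_norm_sub_sq {V : Type*} [NormedAddCommGroup V] {c : V} {E : V → ℝ}
    (hE : ∀ x, x ≠ c → E x = Real.exp (-1 / ‖x - c‖ ^ 2)) (hEc : E c = 0) (x : V) :
    E x = expNegInvGlue (‖x - c‖ ^ 2) := by
  rcases eq_or_ne x c with rfl | hx
  · simp [hEc]
  · have hpos : 0 < ‖x - c‖ ^ 2 := pow_pos (norm_sub_pos_iff.2 hx) 2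
    rw [hE x hx, expNegInvGlue, if_neg hpos.not_ge, neg_div, one_div]

variable {V G : Type*} [NormedAddCommGroup V] [InnerProductSpace ℝ V]
  [NormedAddCommGroup G] [NormedSpace ℝ G]

theorem contDiff_inv_pow_mul_expNegInvGlue_norm_sub_sq (c : V) (m : ℕ) :
    ContDiff ℝ ∞ fun x ↦ (‖x - c‖ ^ 2)⁻¹ ^ m * expNegInvGlue (‖x - c‖ ^ 2) := by
  have hflat : ContDiff ℝ ∞ fun t : ℝ ↦ t⁻¹ ^ m * expNegInvGlue t := by
    simpa using expNegInvGlue.contDiff_polynomial_eval_inv_mul (n := ⊤) (Polynomial.X ^ m)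
  exact hflat.comp ((contDiff_norm_sq ℝ).comp (contDiff_id.sub contDiff_const))

theorem pow_smul_smulLeftCLM_norm_sq_pow_inv_smul (φ : 𝓢(V, G)) {r : ℝ} (hr : r ≠ 0) (m : ℕ)
    (y : V) :
    r ^ (2 * m) • SchwartzMap.smulLeftCLM G (fun u ↦ (‖u‖ ^ 2) ^ m) φ (r⁻¹ • y) =
      (‖y‖ ^ 2) ^ m • φ (r⁻¹ • y) := by
  have hscale : r ^ 2 * ‖r⁻¹ • y‖ ^ 2 = ‖y‖ ^ 2 := by
    rw [norm_smul, mul_pow, Real.norm_eq_abs, sq_abs, ← mul_assoc, ← mul_pow,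
      mul_inv_cancel₀ hr, one_pow, one_mul]
  rw [SchwartzMap.smulLeftCLM_apply_apply (by fun_prop), smul_smul, pow_mul, ← mul_pow, hscale]

theorem expNegInvGlue_smul_tsum_eq_inv_pow_mul_smul_tsum {ι : Type*} (φ : 𝓢(V, G)) (a : ι → ℝ)
    {r : ι → ℝ} (hr : ∀ i, r i ≠ 0) (m : ℕ) (y : V) :
    expNegInvGlue (‖y‖ ^ 2) • ∑' i, a i • φ ((r i)⁻¹ • y) =
      ((‖y‖ ^ 2)⁻¹ ^ m * expNegInvGlue (‖y‖ ^ 2)) •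
        ∑' i, a i • r i ^ (2 * m) •
          SchwartzMap.smulLeftCLM G (fun u ↦ (‖u‖ ^ 2) ^ m) φ ((r i)⁻¹ • y) := by
  rcases eq_or_ne y 0 with rfl | hy
  · simp
  · have hcancel : (‖y‖ ^ 2)⁻¹ ^ m * (‖y‖ ^ 2) ^ m = 1 := by
      rw [← mul_pow, inv_mul_cancel₀ (pow_ne_zero 2 (norm_ne_zero_iff.2 hy)), one_pow]
    simp_rw [pow_smul_smulLeftCLM_norm_sq_pow_inv_smul φ (hr _), smul_comm (a _)]
    rw [tsum_const_smul'', smul_smul, mul_right_comm, hcancel, one_mul]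

theorem contDiff_expNegInvGlue_smul_tsum [CompleteSpace G] {ι : Type*} (φ : 𝓢(V, G))
    {a r : ι → ℝ} {R : ℝ} (ha : Summable a) (hr : ∀ i, r i ≠ 0) (hR : ∀ i, |r i| ≤ R) (c : V) :
    ContDiff ℝ ∞ fun x ↦
      expNegInvGlue (‖x - c‖ ^ 2) • ∑' i, a i • φ ((r i)⁻¹ • (x - c)) := by
  refine contDiff_infty.2 fun m ↦ ?_
  simp_rw [expNegInvGlue_smul_tsum_eq_inv_pow_mul_smul_tsum φ a hr m]
  exact (contDiff_infty.1 (contDiff_inv_pow_mul_expNegInvGlue_norm_sub_sq c m) m).smul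
    (contDiff_tsum_smul_pow_smul_comp_inv_smul_sub _ ha hr hR (by lia) c)

theorem contDiff_expNegInvGlue_smul_tsum_sub_center [CompleteSpace G] {ι : Type*} (h : 𝓢(V, G))
    {a r : ι → ℝ} {R : ℝ} (ha : Summable a) (hr : ∀ i, r i ≠ 0) (hR : ∀ i, |r i| ≤ R)
    (c w : V) :
    ContDiff ℝ ∞ fun x ↦
      expNegInvGlue (‖x - c‖ ^ 2) • ∑' i, a i • h ((r i)⁻¹ • (x - (c - r i • w))) := by
  have htranslate (i : ι) (x : V) :
      (r i)⁻¹ • (x - (c - r i • w)) = (r i)⁻¹ • (x - c) - -w := by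
    rw [sub_sub_eq_add_sub, add_sub_right_comm, smul_add, inv_smul_smul₀ (hr i), sub_neg_eq_add]
  simp_rw [htranslate]
  exact contDiff_expNegInvGlue_smul_tsum (h.compSubConstCLM ℝ (-w)) ha hr hR c

end FlatFactor

section Dyadic

theorem hasCompactSupport_of_forall_le_norm {V G : Type*} [NormedAddCommGroup V] [ProperSpace V]
    [Zero G] {h : V → G} {R : ℝ} (hzero : ∀ x, R ≤ ‖x‖ → h x = 0) : HasCompactSupport h :=
  .intro (isCompact_closedBall 0 R) fun x hx ↦
    hzero x (not_le.1 (mt mem_closedBall_zero_iff.2 hx)).le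

theorem summable_zpow_neg_natCast {b : ℝ} (hb : 1 < b) :
    Summable fun k : ℕ ↦ b ^ (-(k : ℤ)) := by
  simpa using summable_geometric_of_lt_one (by positivity) (inv_lt_one_of_one_lt₀ hb)

theorem mul_norm_smul_mul_inv_norm_smul {V : Type*} [NormedAddCommGroup V] [NormedSpace ℝ V]
    {z : V} (hz : z ≠ 0) (b t : ℝ) : (t * ‖z‖) • (b * ‖z‖⁻¹) • z = (b * t) • z := by
  rw [smul_smul, mul_comm b, mul_assoc, mul_inv_cancel_left₀ (norm_ne_zero_iff.2 hz), mul_comm]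

theorem stmt_4_general {V G : Type*} [NormedAddCommGroup V] [InnerProductSpace ℝ V]
    [NormedAddCommGroup G] [NormedSpace ℝ G] [CompleteSpace G] (h : 𝓢(V, G))
    {c z : V} (hz : z ≠ 0) {s : ℕ → V} {r : ℕ → ℝ}
    (hs : ∀ k : ℕ, s k = c - (3 * (2 : ℝ) ^ (-(k : ℤ))) • z)
    (hr : ∀ k : ℕ, r k = (2 : ℝ) ^ (-(k : ℤ)) * ‖z‖)
    {f : ℕ → V → G} (hf : ∀ k x, f k x = r k • h ((r k)⁻¹ • (x - s k)))
    {E : V → ℝ} (hE : ∀ x, x ≠ c → E x = Real.exp (-1 / ‖x - c‖ ^ 2)) (hEc : E c = 0)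
    {F : V → G} (hF : ∀ x, F x = E x • ∑' k : ℕ, (4 : ℝ) ^ (-(k : ℤ)) • f k x) :
    ContDiff ℝ ∞ F := by
  have hr_pos (k : ℕ) : 0 < r k := by rw [hr]; positivity
  have hr_le (k : ℕ) : |r k| ≤ ‖z‖ := by
    rw [abs_of_pos (hr_pos k), hr]
    exact mul_le_of_le_one_left (norm_nonneg z) (zpow_le_one_of_nonpos₀ one_le_two (by simp))
  have hsum : Summable fun k : ℕ ↦ (4 : ℝ) ^ (-(k : ℤ)) * r k := by
    simp_rw [hr, ← mul_assoc, ← mul_zpow]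
    exact (summable_zpow_neg_natCast (by norm_num)).mul_right _
  have hcenter (k : ℕ) : s k = c - r k • (3 * ‖z‖⁻¹) • z := by
    rw [hs, hr, mul_norm_smul_mul_inv_norm_smul hz]
  convert contDiff_expNegInvGlue_smul_tsum_sub_center h hsum (fun k ↦ (hr_pos k).ne') hr_le c
    ((3 * ‖z‖⁻¹) • z) using 2 with x
  simp_rw [hF, hf, eq_expNegInvGlue_norm_sub_sq hE hEc, hcenter, smul_smul]

end Dyadic

theorem stmt_4 (n : ℕ) (hn : 1 ≤ n)
    (h : EuclideanSpace ℝ (Fin n) → ℝ) (hsmooth : ContDiff ℝ (⊤ : ℕ∞) h)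
    (hpos : ∀ x : EuclideanSpace ℝ (Fin n), ‖x‖ < 1 → 0 < h x)
    (hzero : ∀ x : EuclideanSpace ℝ (Fin n), 1 ≤ ‖x‖ → h x = 0)
    (sinf z : EuclideanSpace ℝ (Fin n)) (hz : z ≠ 0)
    (s : ℕ → EuclideanSpace ℝ (Fin n)) (r : ℕ → ℝ)
    (hs : ∀ k : ℕ, s k = sinf - (3 * (2 : ℝ) ^ (-(k : ℤ))) • z)
    (hr : ∀ k : ℕ, r k = (2 : ℝ) ^ (-(k : ℤ)) * ‖z‖)
    (f : ℕ → EuclideanSpace ℝ (Fin n) → ℝ)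
    (hf : ∀ (k : ℕ) (x : EuclideanSpace ℝ (Fin n)),
      f k x = r k * h ((r k)⁻¹ • (x - s k)))
    (Einf : EuclideanSpace ℝ (Fin n) → ℝ)
    (hEinf : ∀ x : EuclideanSpace ℝ (Fin n), x ≠ sinf →
      Einf x = Real.exp (-1 / ‖x - sinf‖ ^ 2))
    (hEinf0 : Einf sinf = 0)
    (fN : ℕ → EuclideanSpace ℝ (Fin n) → ℝ)
    (hfN : ∀ (N : ℕ) (x : EuclideanSpace ℝ (Fin n)),
      fN N x = Einf x * ∑ k ∈ Finset.range (N + 1), (4 : ℝ) ^ (-(k : ℤ)) * f k x)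
    (F : EuclideanSpace ℝ (Fin n) → ℝ)
    (hF : ∀ x : EuclideanSpace ℝ (Fin n),
      F x = Einf x * ∑' k : ℕ, (4 : ℝ) ^ (-(k : ℤ)) * f k x) :
    ContDiff ℝ (⊤ : ℕ∞) F :=
  stmt_4_general ((hasCompactSupport_of_forall_le_norm hzero).toSchwartzMap hsmooth) hz hs hr hf
    hEinf hEinf0 hF
end

section
/- f and each fN are nonnegative, and their carriers are given by: {s ∈ E : f(s) > 0} = ⋃_{k ∈ ℕ} Metric.ball s_k r_k, and for every N ∈ ℕ, {s ∈ E : fN(s) > 0} = ⋃_{k ≤ N} Metric.ball s_k r_k. -/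
/-!
Call `U` the carrier of a nonnegative function `g` if `U = {g > 0}`. Products intersect
carriers, and sums unite them, also over an infinite index set when every point lies in finitely
many carriers. The balls `B(s k, r k)` satisfy `dist (s k) sinf = 3 * r k` and `r k → 0`, so
they avoid `sinf` and every point lies in finitely many of them; the damping factor `Einf`,
which vanishes only at `sinf`, therefore does not change the carrier of the sum.
-/

open Filter Metric Topology

/-- `U` is the carrier `{g > 0}` of the nonnegative function `g`, encoded as: `g` is positive on `U`
and vanishes off `U`. -/
structure HasCarrier {X R : Type*} [Zero R] [LT R] (g : X → R) (U : Set X) : Prop where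
  pos : ∀ x ∈ U, 0 < g x
  eq_zero : ∀ x ∉ U, g x = 0

namespace HasCarrier

section Basic

variable {X Y R : Type*} [Zero R] [Preorder R] {g : X → R} {U : Set X}

theorem nonneg (hg : HasCarrier g U) (x : X) : 0 ≤ g x := by
  by_cases hx : x ∈ U
  · exact (hg.pos x hx).le
  · exact (hg.eq_zero x hx).ge

theorem setOf_pos_eq (hg : HasCarrier g U) : {x | 0 < g x} = U :=
  Set.ext fun x => ⟨fun hx => by_contra fun hxU => hx.ne' (hg.eq_zero x hxU), hg.pos x⟩

theorem comp (hg : HasCarrier g U) (φ : Y → X) : HasCarrier (fun y => g (φ y)) (φ ⁻¹' U) :=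
  ⟨fun y => hg.pos (φ y), fun y => hg.eq_zero (φ y)⟩

end Basic

section Mul

variable {X R : Type*} [MulZeroClass R] [Preorder R] [PosMulStrictMono R]
  {g₁ g₂ : X → R} {U V : Set X}

theorem mul (h₁ : HasCarrier g₁ U) (h₂ : HasCarrier g₂ V) :
    HasCarrier (fun x => g₁ x * g₂ x) (U ∩ V) where
  pos x hx := mul_pos (h₁.pos x hx.1) (h₂.pos x hx.2)
  eq_zero x hx := by
    by_cases hxU : x ∈ U
    · rw [h₂.eq_zero x fun hxV => hx ⟨hxU, hxV⟩, mul_zero]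
    · rw [h₁.eq_zero x hxU, zero_mul]

theorem mul_of_subset (h₁ : HasCarrier g₁ U) (h₂ : HasCarrier g₂ V) (hVU : V ⊆ U) :
    HasCarrier (fun x => g₁ x * g₂ x) V :=
  Set.inter_eq_right.2 hVU ▸ h₁.mul h₂

theorem const_mul (h₂ : HasCarrier g₂ V) {c : R} (hc : 0 < c) :
    HasCarrier (fun x => c * g₂ x) V :=
  mul_of_subset (U := Set.univ) ⟨fun _ _ => hc, fun _ hx => (hx trivial).elim⟩ h₂ V.subset_univ

end Mul

section Sum

variable {X ι R : Type*} [AddCommMonoid R] [PartialOrder R] [IsOrderedCancelAddMonoid R]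
  {g : ι → X → R} {U : ι → Set X}

theorem finset_sum (hg : ∀ i, HasCarrier (g i) (U i)) (S : Finset ι) :
    HasCarrier (fun x => ∑ i ∈ S, g i x) (⋃ i ∈ S, U i) where
  pos x hx := by
    obtain ⟨i, hiS, hxi⟩ := Set.mem_iUnion₂.1 hx
    exact Finset.sum_pos' (fun j _ => (hg j).nonneg x) ⟨i, hiS, (hg i).pos x hxi⟩
  eq_zero x hx := Finset.sum_eq_zero fun i hiS =>
    (hg i).eq_zero x fun hxi => hx (Set.mem_biUnion hiS hxi)

theorem tsum [TopologicalSpace R] (hg : ∀ i, HasCarrier (g i) (U i))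
    (hfin : ∀ x, {i | x ∈ U i}.Finite) :
    HasCarrier (fun x => ∑' i, g i x) (⋃ i, U i) where
  pos x hx := by
    obtain ⟨i, hxi⟩ := Set.mem_iUnion.1 hx
    have tsum_eq : ∑' j, g j x = ∑ j ∈ (hfin x).toFinset, g j x :=
      tsum_eq_sum fun j hj => (hg j).eq_zero x (by simpa using hj)
    rw [tsum_eq]
    exact (finset_sum hg _).pos x (Set.mem_biUnion ((hfin x).mem_toFinset.2 hxi) hxi)
  eq_zero x hx := by
    have terms_eq_zero : ∀ i, g i x = 0 :=
      fun i => (hg i).eq_zero x fun hxi => hx (Set.mem_iUnion_of_mem i hxi)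
    simp only [terms_eq_zero, tsum_zero]

end Sum

end HasCarrier

theorem preimage_inv_smul_sub_unitBall {E : Type*} [SeminormedAddCommGroup E] [NormedSpace ℝ E]
    (c : E) {r : ℝ} (hr : 0 < r) : (fun x => r⁻¹ • (x - c)) ⁻¹' ball 0 1 = ball c r := by
  ext x
  rw [Set.mem_preimage, mem_ball_zero_iff, norm_smul, norm_inv, Real.norm_of_nonneg hr.le,
    inv_mul_lt_one₀ hr, mem_ball_iff_norm]

theorem HasCarrier.rescale_unitBall {E : Type*} [SeminormedAddCommGroup E] [NormedSpace ℝ E]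
    {h : E → ℝ} (hh : HasCarrier h (ball 0 1)) (c : E) {r : ℝ} (hr : 0 < r) :
    HasCarrier (fun x => r * h (r⁻¹ • (x - c))) (ball c r) :=
  preimage_inv_smul_sub_unitBall c hr ▸ (hh.comp fun x => r⁻¹ • (x - c)).const_mul hr

theorem finite_setOf_mem_ball_of_tendsto {X ι : Type*} [MetricSpace X] {s : ι → X} {r : ι → ℝ}
    {a x : X} (hs : Tendsto s cofinite (𝓝 a)) (hr : Tendsto r cofinite (𝓝 0)) (hxa : x ≠ a) :
    {i | x ∈ ball (s i) (r i)}.Finite := by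
  have eventually_lt : ∀ᶠ i in cofinite, r i < dist x (s i) :=
    hr.eventually_lt (tendsto_const_nhds.dist hs) (dist_pos.2 hxa)
  exact (eventually_cofinite.1 eventually_lt).subset fun i hxi hi => hi.not_gt hxi

section ProportionalDistance

variable {X ι : Type*} {s : ι → X} {r : ι → ℝ} {a : X} {c : ℝ}

theorem notMem_ball_of_dist_eq_mul [PseudoMetricSpace X] {y : X} {ρ : ℝ} (hρ : 0 ≤ ρ) (hc : 1 ≤ c)
    (hdist : dist y a = c * ρ) : a ∉ ball y ρ := by
  rw [mem_ball', hdist, not_lt]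
  exact le_mul_of_one_le_left hρ hc

theorem tendsto_of_dist_eq_mul [PseudoMetricSpace X] {l : Filter ι} (hr : Tendsto r l (𝓝 0))
    (hdist : ∀ i, dist (s i) a = c * r i) : Tendsto s l (𝓝 a) := by
  rw [tendsto_iff_dist_tendsto_zero]
  simpa only [hdist, mul_zero] using hr.const_mul c

theorem finite_setOf_mem_ball_of_dist_eq_mul [MetricSpace X] (hr : Tendsto r cofinite (𝓝 0))
    (hr_nonneg : ∀ i, 0 ≤ r i) (hc : 1 ≤ c) (hdist : ∀ i, dist (s i) a = c * r i) (x : X) :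
    {i | x ∈ ball (s i) (r i)}.Finite := by
  rcases eq_or_ne x a with rfl | hxa
  · exact Set.finite_empty.subset
      fun i hi => notMem_ball_of_dist_eq_mul (hr_nonneg i) hc (hdist i) hi
  · exact finite_setOf_mem_ball_of_tendsto (tendsto_of_dist_eq_mul hr hdist) hr hxa

end ProportionalDistance

theorem tendsto_zpow_neg_mul_cofinite_zero {b : ℝ} (hb : 1 < b) (a : ℝ) :
    Tendsto (fun k : ℕ => b ^ (-(k : ℤ)) * a) cofinite (𝓝 0) := by
  have tendsto_pow : Tendsto (fun k : ℕ => b⁻¹ ^ k) atTop (𝓝 0) :=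
    tendsto_pow_atTop_nhds_zero_of_lt_one (by positivity) (inv_lt_one_of_one_lt₀ hb)
  simpa only [Nat.cofinite_eq_atTop, zpow_neg, zpow_natCast, inv_pow, zero_mul]
    using tendsto_pow.mul_const a

theorem dist_sub_smul_self {E : Type*} [SeminormedAddCommGroup E] [NormedSpace ℝ E]
    (a z : E) {t : ℝ} (ht : 0 ≤ t) : dist (a - t • z) a = t * ‖z‖ := by
  rw [dist_comm, dist_eq_norm, sub_sub_cancel, norm_smul, Real.norm_of_nonneg ht]

theorem stmt_6_general {E : Type*} [NormedAddCommGroup E] [NormedSpace ℝ E]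
    (h : E → ℝ) (hpos : ∀ x, ‖x‖ < 1 → 0 < h x) (hzero : ∀ x, 1 ≤ ‖x‖ → h x = 0)
    (sinf z : E) (hz : z ≠ 0) (s : ℕ → E) (r : ℕ → ℝ)
    (hs : ∀ k : ℕ, s k = sinf - (3 * (2 : ℝ) ^ (-(k : ℤ))) • z)
    (hr : ∀ k : ℕ, r k = (2 : ℝ) ^ (-(k : ℤ)) * ‖z‖)
    (f : ℕ → E → ℝ) (hf : ∀ k x, f k x = r k * h ((r k)⁻¹ • (x - s k)))
    (Einf : E → ℝ) (hEinf : ∀ x, x ≠ sinf → Einf x = Real.exp (-1 / ‖x - sinf‖ ^ 2))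
    (hEinf0 : Einf sinf = 0)
    (fN : ℕ → E → ℝ)
    (hfN : ∀ N x, fN N x = Einf x * ∑ k ∈ Finset.range (N + 1), (4 : ℝ) ^ (-(k : ℤ)) * f k x)
    (F : E → ℝ) (hF : ∀ x, F x = Einf x * ∑' k : ℕ, (4 : ℝ) ^ (-(k : ℤ)) * f k x) :
    (∀ x, 0 ≤ F x) ∧ (∀ N x, 0 ≤ fN N x) ∧
    ({x | 0 < F x} = ⋃ k, ball (s k) (r k)) ∧
    (∀ N, {x | 0 < fN N x} = ⋃ k ≤ N, ball (s k) (r k)) := by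
  have r_pos (k : ℕ) : 0 < r k := hr k ▸ mul_pos (by positivity) (norm_pos_iff.2 hz)
  have r_tendsto : Tendsto r cofinite (𝓝 0) :=
    funext hr ▸ tendsto_zpow_neg_mul_cofinite_zero one_lt_two ‖z‖
  have dist_center (k : ℕ) : dist (s k) sinf = 3 * r k := by
    rw [hs, hr, dist_sub_smul_self _ _ (by positivity), mul_assoc]
  have ball_subset (k : ℕ) : ball (s k) (r k) ⊆ {sinf}ᶜ := Set.subset_compl_singleton_iff.2 <|
    notMem_ball_of_dist_eq_mul (r_pos k).le (by norm_num) (dist_center k)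
  have carrier_h : HasCarrier h (ball 0 1) := ⟨by simpa using hpos, by simpa using hzero⟩
  have carrier_Einf : HasCarrier Einf {sinf}ᶜ :=
    ⟨fun x hx => hEinf x hx ▸ Real.exp_pos _, fun x hx => not_not.1 hx ▸ hEinf0⟩
  have carrier_term (k : ℕ) :
      HasCarrier (fun x => (4 : ℝ) ^ (-(k : ℤ)) * f k x) (ball (s k) (r k)) :=
    funext (hf k) ▸ (carrier_h.rescale_unitBall (s k) (r_pos k)).const_mul (by positivity)
  have carrier_F : HasCarrier F (⋃ k, ball (s k) (r k)) := funext hF ▸ carrier_Einf.mul_of_subset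
    (.tsum carrier_term <| finite_setOf_mem_ball_of_dist_eq_mul r_tendsto (fun k => (r_pos k).le)
      (by norm_num) dist_center) (Set.iUnion_subset ball_subset)
  have carrier_fN (N : ℕ) : HasCarrier (fN N) (⋃ k ≤ N, ball (s k) (r k)) := by
    simpa only [← hfN, Finset.mem_range, Nat.lt_succ_iff] using carrier_Einf.mul_of_subset
      (.finset_sum carrier_term (Finset.range (N + 1)))
      (Set.iUnion₂_subset fun k _ => ball_subset k)
  exact ⟨carrier_F.nonneg, fun N => (carrier_fN N).nonneg, carrier_F.setOf_pos_eq,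
    fun N => (carrier_fN N).setOf_pos_eq⟩

theorem stmt_6 (n : ℕ) (hn : 1 ≤ n)
    (h : EuclideanSpace ℝ (Fin n) → ℝ) (hsmooth : ContDiff ℝ (⊤ : ℕ∞) h)
    (hpos : ∀ x : EuclideanSpace ℝ (Fin n), ‖x‖ < 1 → 0 < h x)
    (hzero : ∀ x : EuclideanSpace ℝ (Fin n), 1 ≤ ‖x‖ → h x = 0)
    (sinf z : EuclideanSpace ℝ (Fin n)) (hz : z ≠ 0)
    (s : ℕ → EuclideanSpace ℝ (Fin n)) (r : ℕ → ℝ)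
    (hs : ∀ k : ℕ, s k = sinf - (3 * (2 : ℝ) ^ (-(k : ℤ))) • z)
    (hr : ∀ k : ℕ, r k = (2 : ℝ) ^ (-(k : ℤ)) * ‖z‖)
    (f : ℕ → EuclideanSpace ℝ (Fin n) → ℝ)
    (hf : ∀ (k : ℕ) (x : EuclideanSpace ℝ (Fin n)),
      f k x = r k * h ((r k)⁻¹ • (x - s k)))
    (Einf : EuclideanSpace ℝ (Fin n) → ℝ)
    (hEinf : ∀ x : EuclideanSpace ℝ (Fin n), x ≠ sinf →
      Einf x = Real.exp (-1 / ‖x - sinf‖ ^ 2))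
    (hEinf0 : Einf sinf = 0)
    (fN : ℕ → EuclideanSpace ℝ (Fin n) → ℝ)
    (hfN : ∀ (N : ℕ) (x : EuclideanSpace ℝ (Fin n)),
      fN N x = Einf x * ∑ k ∈ Finset.range (N + 1), (4 : ℝ) ^ (-(k : ℤ)) * f k x)
    (F : EuclideanSpace ℝ (Fin n) → ℝ)
    (hF : ∀ x : EuclideanSpace ℝ (Fin n),
      F x = Einf x * ∑' k : ℕ, (4 : ℝ) ^ (-(k : ℤ)) * f k x) :
    (∀ x : EuclideanSpace ℝ (Fin n), 0 ≤ F x) ∧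
    (∀ (N : ℕ) (x : EuclideanSpace ℝ (Fin n)), 0 ≤ fN N x) ∧
    ({x : EuclideanSpace ℝ (Fin n) | 0 < F x} = ⋃ k : ℕ, Metric.ball (s k) (r k)) ∧
    (∀ N : ℕ, {x : EuclideanSpace ℝ (Fin n) | 0 < fN N x} =
      ⋃ k ≤ N, Metric.ball (s k) (r k)) :=
  stmt_6_general h hpos hzero sinf z hz s r hs hr f hf Einf hEinf hEinf0 fN hfN F hF
end

section
/- For every N ∈ ℕ and every s ∈ E: if fN(s) ≠ 0 or f(s) = 0, then f(s) = fN(s). (In the paper's words: f = f^N wherever f^N is nonzero or f vanishes.) -/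
/-!
The ball carrying the `k`-th bump has centre `s_∞ - 3 t z` and radius `t ‖z‖` with `t = 2⁻ᵏ`. For
two scales with `2 u ≤ t` the centres are at distance `3 (t - u) ‖z‖ ≥ (t + u) ‖z‖`, so the balls
are pairwise disjoint and at most one term of the series is nonzero at any point. Hence a partial
sum either contains that term, and equals the full sum, or misses it, and vanishes.
-/

open Function Metric

theorem sum_eq_zero_or_tsum_eq_sum {ι M : Type*} [AddCommMonoid M] [TopologicalSpace M]
    {g : ι → M} (hg : (support g).Subsingleton) (T : Finset ι) :
    ∑ i ∈ T, g i = 0 ∨ ∑' i, g i = ∑ i ∈ T, g i := by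
  by_cases hT : support g ⊆ T
  · exact .inr (tsum_eq_sum' hT)
  · obtain ⟨j, hj, hjT⟩ := Set.not_subset.mp hT
    refine .inl (Finset.sum_eq_zero fun i hi => ?_)
    by_contra hgi
    exact hjT (hg hgi hj ▸ hi)

theorem subsingleton_support_of_pairwise_disjoint {ι α M : Type*} [Zero M] {g : ι → α → M}
    (hg : Pairwise (Disjoint on fun i => support (g i))) (x : α) :
    (support fun i => g i x).Subsingleton :=
  fun _ hi _ hj => hg.eq (Set.not_disjoint_iff.mpr ⟨x, hi, hj⟩)

theorem two_mul_two_zpow_neg_le {j k : ℕ} (hjk : j < k) :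
    2 * (2 : ℝ) ^ (-(k : ℤ)) ≤ (2 : ℝ) ^ (-(j : ℤ)) := by
  rw [← zpow_one_add₀ two_ne_zero]
  exact zpow_le_zpow_right₀ one_le_two (by lia)

section NormedSpace

variable {E : Type*} [NormedAddCommGroup E] [NormedSpace ℝ E]

/-- The profile `h`, thought of as living on the unit ball around `0`, transported to the ball of
radius `r` around `c`, with its values multiplied by `r` as well. It is meant for `0 < r`. -/
noncomputable def rescaledBump (h : E → ℝ) (c : E) (r : ℝ) (x : E) : ℝ :=
  r * h (r⁻¹ • (x - c))

theorem support_rescaledBump_subset_ball {h : E → ℝ} (hzero : ∀ x, 1 ≤ ‖x‖ → h x = 0)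
    (c : E) {r : ℝ} (hr : 0 < r) : support (rescaledBump h c r) ⊆ ball c r := by
  intro x hx
  by_contra hxc
  have hle : r ≤ ‖x - c‖ := by simpa [dist_eq_norm] using hxc
  have hone : 1 ≤ ‖r⁻¹ • (x - c)‖ := by
    rwa [norm_smul, norm_inv, Real.norm_of_nonneg hr.le, inv_mul_eq_div, one_le_div hr]
  exact hx (mul_eq_zero_of_right r (hzero _ hone))

theorem disjoint_ball_sub_three_mul_smul (c z : E) {t u : ℝ} (htu : 2 * u ≤ t) :
    Disjoint (ball (c - (3 * t) • z) (t * ‖z‖)) (ball (c - (3 * u) • z) (u * ‖z‖)) := by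
  apply ball_disjoint_ball
  have hsub : c - (3 * t) • z - (c - (3 * u) • z) = (3 * (u - t)) • z := by module
  calc t * ‖z‖ + u * ‖z‖ = (t + u) * ‖z‖ := by ring
    _ ≤ |3 * (u - t)| * ‖z‖ := by
      gcongr
      linarith [neg_le_abs (3 * (u - t))]
    _ = dist (c - (3 * t) • z) (c - (3 * u) • z) := by
      rw [dist_eq_norm, hsub, norm_smul, Real.norm_eq_abs]

/-- The bumps `f_k` of the paper, accumulating at `c = s_∞` along the direction `z`. -/
noncomputable def dyadicBump (h : E → ℝ) (c z : E) (k : ℕ) : E → ℝ :=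
  rescaledBump h (c - (3 * (2 : ℝ) ^ (-(k : ℤ))) • z) ((2 : ℝ) ^ (-(k : ℤ)) * ‖z‖)

theorem pairwise_disjoint_support_dyadicBump {h : E → ℝ} (hzero : ∀ x, 1 ≤ ‖x‖ → h x = 0)
    (c : E) {z : E} (hz : z ≠ 0) :
    Pairwise (Disjoint on fun k => support (dyadicBump h c z k)) := by
  have hsupp (k : ℕ) := support_rescaledBump_subset_ball hzero
    (c - (3 * (2 : ℝ) ^ (-(k : ℤ))) • z) (r := (2 : ℝ) ^ (-(k : ℤ)) * ‖z‖) (by positivity)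
  rw [pairwise_disjoint_on]
  intro j k hjk
  exact (disjoint_ball_sub_three_mul_smul c z (two_mul_two_zpow_neg_le hjk)).mono
    (hsupp j) (hsupp k)

theorem stmt_7_general {h : E → ℝ} (hzero : ∀ x, 1 ≤ ‖x‖ → h x = 0) (c : E) {z : E} (hz : z ≠ 0)
    (w : E → ℝ) (a : ℕ → ℝ) (T : Finset ℕ) (x : E)
    (hx : w x * ∑ k ∈ T, a k * dyadicBump h c z k x ≠ 0 ∨
      w x * ∑' k, a k * dyadicBump h c z k x = 0) :
    w x * ∑' k, a k * dyadicBump h c z k x = w x * ∑ k ∈ T, a k * dyadicBump h c z k x := by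
  have hsub : (support fun k => a k * dyadicBump h c z k x).Subsingleton :=
    (subsingleton_support_of_pairwise_disjoint
      (pairwise_disjoint_support_dyadicBump hzero c hz) x).anti (support_mul_subset_right a _)
  rcases sum_eq_zero_or_tsum_eq_sum hsub T with hsum | htsum
  · rw [hsum, mul_zero] at hx ⊢
    exact hx.resolve_left (not_not_intro rfl)
  · rw [htsum]

end NormedSpace

theorem stmt_7 (n : ℕ) (hn : 1 ≤ n)
    (h : EuclideanSpace ℝ (Fin n) → ℝ) (hsmooth : ContDiff ℝ (⊤ : ℕ∞) h)
    (hpos : ∀ x : EuclideanSpace ℝ (Fin n), ‖x‖ < 1 → 0 < h x)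
    (hzero : ∀ x : EuclideanSpace ℝ (Fin n), 1 ≤ ‖x‖ → h x = 0)
    (sinf z : EuclideanSpace ℝ (Fin n)) (hz : z ≠ 0)
    (s : ℕ → EuclideanSpace ℝ (Fin n)) (r : ℕ → ℝ)
    (hs : ∀ k : ℕ, s k = sinf - (3 * (2 : ℝ) ^ (-(k : ℤ))) • z)
    (hr : ∀ k : ℕ, r k = (2 : ℝ) ^ (-(k : ℤ)) * ‖z‖)
    (f : ℕ → EuclideanSpace ℝ (Fin n) → ℝ)
    (hf : ∀ (k : ℕ) (x : EuclideanSpace ℝ (Fin n)),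
      f k x = r k * h ((r k)⁻¹ • (x - s k)))
    (Einf : EuclideanSpace ℝ (Fin n) → ℝ)
    (hEinf : ∀ x : EuclideanSpace ℝ (Fin n), x ≠ sinf →
      Einf x = Real.exp (-1 / ‖x - sinf‖ ^ 2))
    (hEinf0 : Einf sinf = 0)
    (fN : ℕ → EuclideanSpace ℝ (Fin n) → ℝ)
    (hfN : ∀ (N : ℕ) (x : EuclideanSpace ℝ (Fin n)),
      fN N x = Einf x * ∑ k ∈ Finset.range (N + 1), (4 : ℝ) ^ (-(k : ℤ)) * f k x)
    (F : EuclideanSpace ℝ (Fin n) → ℝ)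
    (hF : ∀ x : EuclideanSpace ℝ (Fin n),
      F x = Einf x * ∑' k : ℕ, (4 : ℝ) ^ (-(k : ℤ)) * f k x) :
    ∀ (N : ℕ) (x : EuclideanSpace ℝ (Fin n)),
      (fN N x ≠ 0 ∨ F x = 0) → F x = fN N x := by
  simp only [hF, hfN, hf, hr, hs]
  exact fun N => stmt_7_general hzero sinf hz Einf (fun k => (4 : ℝ) ^ (-(k : ℤ)))
    (Finset.range (N + 1))
end

section
/- f vanishes to infinite order at every point of its zero set: for every j ∈ ℕ and every s ∈ E with f(s) = 0, iteratedFDeriv ℝ j f s = 0. The same holds for each fN: for every N, j and every s with fN(s) = 0, iteratedFDeriv ℝ j fN s = 0. -/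
/-!
A function vanishing on a closed half-space has all iterated derivatives zero there, smooth or not:
half-spaces are sets of unique differentiability, so inductively every derivative that exists is
the derivative of zero. If `x` lies outside an open ball, the half-space through `x` orthogonal to
the radius misses the ball, so a bump supported in the ball is flat at `x`. At a zero of a finite
sum of bumps every summand vanishes by nonnegativity, so the sum is flat there. Away from the limit
of the centres the series is locally such a finite sum, and at the limit point a single half-space
misses all the balls. The finite-sum argument cannot be replaced by half-spaces throughout:
consecutive balls are tangent, and no half-space at the point of tangency avoids both.
-/

open Filter Metric Set Topology
open scoped ContDiff InnerProductSpace

theorem eqOn_iteratedFDeriv_zero_of_eqOn_zero {𝕜 E F : Type*} [NontriviallyNormedField 𝕜]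
    [NormedAddCommGroup E] [NormedSpace 𝕜 E] [NormedAddCommGroup F] [NormedSpace 𝕜 F]
    {g : E → F} {S : Set E} (hS : UniqueDiffOn 𝕜 S) (hg : EqOn g 0 S) (j : ℕ) :
    EqOn (iteratedFDeriv 𝕜 j g) 0 S := by
  induction j with
  | zero =>
    intro y hy
    ext m
    simp [hg hy]
  | succ j ih =>
    intro y hy
    have fderiv_eq_zero : fderiv 𝕜 (iteratedFDeriv 𝕜 j g) y = 0 := by
      by_cases hd : DifferentiableAt 𝕜 (iteratedFDeriv 𝕜 j g) y
      · rw [← hd.fderivWithin (hS y hy), fderivWithin_congr ih (ih hy), fderivWithin_zero]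
        rfl
      · exact fderiv_zero_of_not_differentiableAt hd
    ext m
    simp [iteratedFDeriv_succ_apply_left, fderiv_eq_zero]

theorem uniqueDiffOn_halfSpace_ge {E : Type*} [NormedAddCommGroup E] [NormedSpace ℝ E]
    {ℓ : StrongDual ℝ E} (hℓ : ℓ ≠ 0) (a : ℝ) : UniqueDiffOn ℝ {y | a ≤ ℓ y} := by
  refine uniqueDiffOn_convex (convex_halfSpace_ge ℓ.isLinear a) ?_
  obtain ⟨y, hy⟩ := ℓ.toLinearMap.surjective
    (ContinuousLinearMap.coe_injective.ne hℓ) (a + 1)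
  have hay : a < ℓ y := (lt_add_one a).trans_eq hy.symm
  exact ⟨y, interior_maximal (fun w hw => le_of_lt hw)
    (isOpen_lt continuous_const ℓ.continuous) hay⟩

/-- `g` vanishes to infinite order at `x`. Smoothness is not part of the definition: an iterated
derivative that does not exist has the value `0` by convention. -/
def IsFlatAt {E F : Type*} [NormedAddCommGroup E] [NormedSpace ℝ E] [NormedAddCommGroup F]
    [NormedSpace ℝ F] (g : E → F) (x : E) : Prop :=
  ∀ j : ℕ, iteratedFDeriv ℝ j g x = 0

namespace IsFlatAt

variable {E F : Type*} [NormedAddCommGroup E] [NormedSpace ℝ E] [NormedAddCommGroup F]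
  [NormedSpace ℝ F] {x : E}

theorem congr_of_eventuallyEq {g₁ g₂ : E → F} (hg : IsFlatAt g₂ x) (h : g₁ =ᶠ[𝓝 x] g₂) :
    IsFlatAt g₁ x :=
  fun j => ((h.iteratedFDeriv ℝ j).eq_of_nhds).trans (hg j)

theorem sum {ι : Type*} {s : Finset ι} {g : ι → E → F}
    (hsmooth : ∀ i ∈ s, ContDiffAt ℝ ∞ (g i) x)
    (hflat : ∀ i ∈ s, IsFlatAt (g i) x) : IsFlatAt (fun y => ∑ i ∈ s, g i y) x := by
  intro j
  rw [iteratedFDeriv_fun_sum_apply fun i hi => (hsmooth i hi).of_le (mod_cast le_top)]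
  exact Finset.sum_eq_zero fun i hi => hflat i hi j

theorem of_eq_zero_on_halfSpace {g : E → F} {ℓ : StrongDual ℝ E} (hℓ : ℓ ≠ 0)
    (hg : ∀ y, ℓ x ≤ ℓ y → g y = 0) : IsFlatAt g x :=
  fun j => eqOn_iteratedFDeriv_zero_of_eqOn_zero (uniqueDiffOn_halfSpace_ge hℓ (ℓ x)) hg j
    (le_refl (ℓ x))

end IsFlatAt

section InnerProductSpace

variable {E : Type*} [NormedAddCommGroup E] [InnerProductSpace ℝ E]

theorem notMem_ball_of_inner_le_inner {c x y : E} {r : ℝ} (hx : x ∉ ball c r)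
    (hxy : ⟪x - c, x⟫_ℝ ≤ ⟪x - c, y⟫_ℝ) : y ∉ ball c r := by
  rw [mem_ball_iff_norm, not_lt] at hx ⊢
  refine hx.trans ?_
  have inner_le : ‖x - c‖ * ‖x - c‖ ≤ ‖x - c‖ * ‖y - c‖ :=
    calc ‖x - c‖ * ‖x - c‖ = ⟪x - c, x⟫_ℝ - ⟪x - c, c⟫_ℝ := by
          rw [← real_inner_self_eq_norm_mul_norm, inner_sub_right]
      _ ≤ ⟪x - c, y⟫_ℝ - ⟪x - c, c⟫_ℝ := by gcongr
      _ = ⟪x - c, y - c⟫_ℝ := (inner_sub_right _ _ _).symm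
      _ ≤ ‖x - c‖ * ‖y - c‖ := real_inner_le_norm _ _
  rcases (norm_nonneg (x - c)).eq_or_lt with hzero | hpos
  · exact hzero ▸ norm_nonneg _
  · exact le_of_mul_le_mul_left inner_le hpos

theorem IsFlatAt.of_eq_zero_of_inner_le {F : Type*} [NormedAddCommGroup F] [NormedSpace ℝ F]
    {g : E → F} {v x : E} (hv : v ≠ 0) (hg : ∀ y, ⟪v, x⟫_ℝ ≤ ⟪v, y⟫_ℝ → g y = 0) :
    IsFlatAt g x :=
  .of_eq_zero_on_halfSpace (ℓ := innerSL ℝ v)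
    (fun h => hv (inner_self_eq_zero.1 (DFunLike.congr_fun h v))) hg

theorem IsFlatAt.of_eq_zero_off_ball {F : Type*} [NormedAddCommGroup F] [NormedSpace ℝ F]
    {g : E → F} {c x : E} {r : ℝ} (hr : 0 < r) (hg : ∀ y ∉ ball c r, g y = 0)
    (hx : x ∉ ball c r) : IsFlatAt g x := by
  have hxc : x - c ≠ 0 := sub_ne_zero.2 fun h => hx (h ▸ mem_ball_self hr)
  exact .of_eq_zero_of_inner_le hxc fun y hy => hg y (notMem_ball_of_inner_le_inner hx hy)

end InnerProductSpace

theorem exists_eventually_notMem_ball_of_tendsto {X : Type*} [MetricSpace X] {c : ℕ → X}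
    {r : ℕ → ℝ} {p x : X} (hc : Tendsto c atTop (𝓝 p)) (hr : Tendsto r atTop (𝓝 0))
    (hx : x ≠ p) : ∃ N, ∀ᶠ y in 𝓝 x, ∀ k ≥ N, y ∉ ball (c k) (r k) := by
  have hε : 0 < dist x p / 3 := by have := dist_pos.2 hx; positivity
  obtain ⟨N, hN⟩ := eventually_atTop.1
    ((hc.eventually (ball_mem_nhds p hε)).and (hr.eventually_lt_const hε))
  refine ⟨N, ?_⟩
  filter_upwards [ball_mem_nhds x hε] with y hyx k hk hyk
  obtain ⟨hck, hrk⟩ := hN k hk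
  rw [mem_ball] at hyx hyk
  linarith [dist_triangle4 x y (c k) p, dist_comm x y]

/-- `g` is a smooth bump carried by the ball of centre `c` and radius `r`: positive inside the open
ball, zero outside. -/
structure IsSmoothBump {E : Type*} [NormedAddCommGroup E] [NormedSpace ℝ E] (g : E → ℝ) (c : E)
    (r : ℝ) : Prop where
  radius_pos : 0 < r
  contDiff : ContDiff ℝ ∞ g
  pos : ∀ y ∈ ball c r, 0 < g y
  eq_zero : ∀ y ∉ ball c r, g y = 0

namespace IsSmoothBump

variable {E : Type*} [NormedAddCommGroup E] [NormedSpace ℝ E] {g : E → ℝ} {c : E} {r : ℝ}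

theorem nonneg (hg : IsSmoothBump g c r) (y : E) : 0 ≤ g y := by
  by_cases hy : y ∈ ball c r
  · exact (hg.pos y hy).le
  · exact (hg.eq_zero y hy).ge

theorem eq_zero_iff (hg : IsSmoothBump g c r) {y : E} : g y = 0 ↔ y ∉ ball c r :=
  ⟨fun h hy => (hg.pos y hy).ne' h, hg.eq_zero y⟩

theorem const_mul (hg : IsSmoothBump g c r) {a : ℝ} (ha : 0 < a) :
    IsSmoothBump (fun y => a * g y) c r where
  radius_pos := hg.radius_pos
  contDiff := contDiff_const.mul hg.contDiff
  pos y hy := mul_pos ha (hg.pos y hy)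
  eq_zero y hy := by rw [hg.eq_zero y hy, mul_zero]

theorem comp_rescale (hg : IsSmoothBump g 0 1) (c : E) (hr : 0 < r) :
    IsSmoothBump (fun y => g (r⁻¹ • (y - c))) c r := by
  have mem_ball_rescale (y : E) : r⁻¹ • (y - c) ∈ ball (0 : E) 1 ↔ y ∈ ball c r := by
    rw [mem_ball_zero_iff, norm_smul, norm_inv, Real.norm_of_nonneg hr.le, mem_ball_iff_norm,
      inv_mul_lt_one₀ hr]
  exact
    { radius_pos := hr
      contDiff := hg.contDiff.comp (by fun_prop)
      pos := fun y hy => hg.pos _ ((mem_ball_rescale y).2 hy)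
      eq_zero := fun y hy => hg.eq_zero _ (mt (mem_ball_rescale y).1 hy) }

end IsSmoothBump

section BumpSeries

variable {E : Type*} [NormedAddCommGroup E] [InnerProductSpace ℝ E] {w : E → ℝ}

theorem isFlatAt_mul_sum_bump {ι : Type*} {s : Finset ι} {g : ι → E → ℝ} {c : ι → E} {r : ι → ℝ}
    {x : E} (hw : ContDiffAt ℝ ∞ w x) (hg : ∀ i ∈ s, IsSmoothBump (g i) (c i) (r i))
    (hwx : w x = 0 → ∀ i ∈ s, x ∉ ball (c i) (r i)) (hx : w x * ∑ i ∈ s, g i x = 0) :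
    IsFlatAt (fun y => w y * ∑ i ∈ s, g i y) x := by
  have hball : ∀ i ∈ s, x ∉ ball (c i) (r i) := by
    rcases mul_eq_zero.1 hx with hw0 | hsum
    · exact hwx hw0
    · rw [Finset.sum_eq_zero_iff_of_nonneg fun i hi => (hg i hi).nonneg x] at hsum
      exact fun i hi => (hg i hi).eq_zero_iff.1 (hsum i hi)
  simp only [Finset.mul_sum]
  refine .sum (fun i hi => hw.mul (hg i hi).contDiff.contDiffAt) fun i hi => ?_
  refine .of_eq_zero_off_ball (hg i hi).radius_pos (fun y hy => ?_) (hball i hi)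
  rw [(hg i hi).eq_zero y hy, mul_zero]

variable {g : ℕ → E → ℝ} {c : ℕ → E} {r : ℕ → ℝ} {p : E}

theorem isFlatAt_mul_tsum_bump_of_ne {x : E} (hw : ContDiffAt ℝ ∞ w x)
    (hg : ∀ k, IsSmoothBump (g k) (c k) (r k)) (hc : Tendsto c atTop (𝓝 p))
    (hr : Tendsto r atTop (𝓝 0)) (hxp : x ≠ p) (hwx : w x ≠ 0)
    (hx : w x * ∑' k, g k x = 0) : IsFlatAt (fun y => w y * ∑' k, g k y) x := by
  obtain ⟨N, hN⟩ := exists_eventually_notMem_ball_of_tendsto hc hr hxp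
  have locally_finite_sum : (fun y => w y * ∑' k, g k y) =ᶠ[𝓝 x]
      fun y => w y * ∑ k ∈ Finset.range N, g k y := by
    filter_upwards [hN] with y hy
    rw [tsum_eq_sum (s := Finset.range N) fun k hk => (hg k).eq_zero y (hy k (by simpa using hk))]
  refine IsFlatAt.congr_of_eventuallyEq ?_ locally_finite_sum
  exact isFlatAt_mul_sum_bump hw (fun k _ => hg k) (fun h => absurd h hwx)
    (locally_finite_sum.eq_of_nhds.symm.trans hx)

theorem isFlatAt_mul_tsum_of_inner_le {v : E} (hv : v ≠ 0)
    (hg : ∀ k y, ⟪v, p⟫_ℝ ≤ ⟪v, y⟫_ℝ → g k y = 0) : IsFlatAt (fun y => w y * ∑' k, g k y) p := by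
  refine .of_eq_zero_of_inner_le hv fun y hy => ?_
  simp only [fun k => hg k y hy, tsum_zero, mul_zero]

end BumpSeries

section ExponentialWeight

variable {E : Type*} [NormedAddCommGroup E]

theorem contDiff_expNegInvGlue_norm_sub_sq [InnerProductSpace ℝ E] (p : E) :
    ContDiff ℝ ∞ fun x => expNegInvGlue (‖x - p‖ ^ 2) :=
  expNegInvGlue.contDiff.comp ((contDiff_id.sub contDiff_const).norm_sq ℝ)

theorem expNegInvGlue_norm_sub_sq_eq_zero_iff {p x : E} :
    expNegInvGlue (‖x - p‖ ^ 2) = 0 ↔ x = p := by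
  rw [expNegInvGlue.zero_iff_nonpos, sq_nonpos_iff, norm_sub_eq_zero_iff]

theorem eq_expNegInvGlue_norm_sub_sq_s8 {w : E → ℝ} {p : E}
    (hw : ∀ x, x ≠ p → w x = Real.exp (-1 / ‖x - p‖ ^ 2)) (hwp : w p = 0) :
    w = fun x => expNegInvGlue (‖x - p‖ ^ 2) := by
  ext x
  rcases eq_or_ne x p with rfl | hx
  · simp [hwp]
  · have norm_sq_pos : 0 < ‖x - p‖ ^ 2 := by have := norm_sub_pos_iff.2 hx; positivity
    rw [hw x hx, expNegInvGlue, if_neg norm_sq_pos.not_ge, neg_div, one_div]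

end ExponentialWeight

section GeometricBalls

variable {E : Type*} [NormedAddCommGroup E]

theorem tendsto_two_zpow_neg_atTop : Tendsto (fun k : ℕ => (2 : ℝ) ^ (-(k : ℤ))) atTop (𝓝 0) := by
  simpa [← inv_pow] using
    tendsto_pow_atTop_nhds_zero_of_lt_one (inv_nonneg.2 zero_le_two)
      (inv_lt_one_of_one_lt₀ (one_lt_two (α := ℝ)))

theorem tendsto_sub_three_mul_two_zpow_neg_smul [NormedSpace ℝ E] (p z : E) :
    Tendsto (fun k : ℕ => p - (3 * (2 : ℝ) ^ (-(k : ℤ))) • z) atTop (𝓝 p) := by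
  simpa using tendsto_const_nhds.sub ((tendsto_two_zpow_neg_atTop.const_mul 3).smul_const z)

theorem notMem_ball_sub_three_mul_smul [NormedSpace ℝ E] (p z : E) {t : ℝ} (ht : 0 ≤ t) :
    p ∉ ball (p - (3 * t) • z) (t * ‖z‖) := by
  rw [mem_ball_iff_norm, sub_sub_cancel, norm_smul, Real.norm_of_nonneg (by positivity), not_lt]
  have : 0 ≤ t * ‖z‖ := by positivity
  linarith

theorem notMem_ball_sub_three_mul_smul_of_inner_le [InnerProductSpace ℝ E] {p z y : E} {t : ℝ}
    (ht : 0 ≤ t) (hy : ⟪z, p⟫_ℝ ≤ ⟪z, y⟫_ℝ) : y ∉ ball (p - (3 * t) • z) (t * ‖z‖) := by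
  refine notMem_ball_of_inner_le_inner (notMem_ball_sub_three_mul_smul p z ht) ?_
  rw [sub_sub_cancel, real_inner_smul_left, real_inner_smul_left]
  gcongr

end GeometricBalls

theorem stmt_8_general {E : Type*} [NormedAddCommGroup E] [InnerProductSpace ℝ E]
    (h : E → ℝ) (hsmooth : ContDiff ℝ ∞ h)
    (hpos : ∀ x : E, ‖x‖ < 1 → 0 < h x) (hzero : ∀ x : E, 1 ≤ ‖x‖ → h x = 0)
    (sinf z : E) (hz : z ≠ 0) (s : ℕ → E) (r : ℕ → ℝ)
    (hs : ∀ k : ℕ, s k = sinf - (3 * (2 : ℝ) ^ (-(k : ℤ))) • z)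
    (hr : ∀ k : ℕ, r k = (2 : ℝ) ^ (-(k : ℤ)) * ‖z‖)
    (f : ℕ → E → ℝ) (hf : ∀ (k : ℕ) (x : E), f k x = r k * h ((r k)⁻¹ • (x - s k)))
    (Einf : E → ℝ) (hEinf : ∀ x : E, x ≠ sinf → Einf x = Real.exp (-1 / ‖x - sinf‖ ^ 2))
    (hEinf0 : Einf sinf = 0)
    (fN : ℕ → E → ℝ)
    (hfN : ∀ (N : ℕ) (x : E),
      fN N x = Einf x * ∑ k ∈ Finset.range (N + 1), (4 : ℝ) ^ (-(k : ℤ)) * f k x)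
    (F : E → ℝ) (hF : ∀ x : E, F x = Einf x * ∑' k : ℕ, (4 : ℝ) ^ (-(k : ℤ)) * f k x) :
    (∀ x : E, F x = 0 → IsFlatAt F x) ∧
    (∀ (N : ℕ) (x : E), fN N x = 0 → IsFlatAt (fN N) x) := by
  obtain rfl : s = fun k : ℕ => sinf - (3 * (2 : ℝ) ^ (-(k : ℤ))) • z := funext hs
  obtain rfl : r = fun k : ℕ => (2 : ℝ) ^ (-(k : ℤ)) * ‖z‖ := funext hr
  obtain rfl : F = fun x => Einf x * ∑' k : ℕ, (4 : ℝ) ^ (-(k : ℤ)) * f k x := funext hF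
  obtain rfl : fN = fun N x => Einf x * ∑ k ∈ Finset.range (N + 1), (4 : ℝ) ^ (-(k : ℤ)) * f k x :=
    funext₂ hfN
  obtain rfl := eq_expNegInvGlue_norm_sub_sq_s8 hEinf hEinf0
  have hh : IsSmoothBump h 0 1 := ⟨one_pos, hsmooth, by simpa using hpos, by simpa using hzero⟩
  have hr_pos (k : ℕ) : 0 < (2 : ℝ) ^ (-(k : ℤ)) * ‖z‖ :=
    mul_pos (by positivity) (norm_pos_iff.2 hz)
  have hterm (k : ℕ) : IsSmoothBump (fun x => (4 : ℝ) ^ (-(k : ℤ)) * f k x)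
      (sinf - (3 * (2 : ℝ) ^ (-(k : ℤ))) • z) ((2 : ℝ) ^ (-(k : ℤ)) * ‖z‖) := by
    rw [funext (hf k)]
    exact ((hh.comp_rescale _ (hr_pos k)).const_mul (hr_pos k)).const_mul (by positivity)
  have hw (x : E) := (contDiff_expNegInvGlue_norm_sub_sq sinf).contDiffAt (x := x)
  refine ⟨fun x hx => ?_, fun N x hx => isFlatAt_mul_sum_bump (hw x) (fun k _ => hterm k) ?_ hx⟩
  · rcases eq_or_ne x sinf with rfl | hne
    · exact isFlatAt_mul_tsum_of_inner_le hz fun k y hy => (hterm k).eq_zero y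
        (notMem_ball_sub_three_mul_smul_of_inner_le (by positivity) hy)
    · have hr_lim : Tendsto (fun k : ℕ => (2 : ℝ) ^ (-(k : ℤ)) * ‖z‖) atTop (𝓝 0) := by
        simpa using tendsto_two_zpow_neg_atTop.mul_const ‖z‖
      exact isFlatAt_mul_tsum_bump_of_ne (hw x) hterm
        (tendsto_sub_three_mul_two_zpow_neg_smul sinf z) hr_lim hne
        (expNegInvGlue_norm_sub_sq_eq_zero_iff.not.2 hne) hx
  · intro hw0 k _
    rw [expNegInvGlue_norm_sub_sq_eq_zero_iff.1 hw0]
    exact notMem_ball_sub_three_mul_smul sinf z (by positivity)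

theorem stmt_8 (n : ℕ) (hn : 1 ≤ n)
    (h : EuclideanSpace ℝ (Fin n) → ℝ) (hsmooth : ContDiff ℝ (⊤ : ℕ∞) h)
    (hpos : ∀ x : EuclideanSpace ℝ (Fin n), ‖x‖ < 1 → 0 < h x)
    (hzero : ∀ x : EuclideanSpace ℝ (Fin n), 1 ≤ ‖x‖ → h x = 0)
    (sinf z : EuclideanSpace ℝ (Fin n)) (hz : z ≠ 0)
    (s : ℕ → EuclideanSpace ℝ (Fin n)) (r : ℕ → ℝ)
    (hs : ∀ k : ℕ, s k = sinf - (3 * (2 : ℝ) ^ (-(k : ℤ))) • z)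
    (hr : ∀ k : ℕ, r k = (2 : ℝ) ^ (-(k : ℤ)) * ‖z‖)
    (f : ℕ → EuclideanSpace ℝ (Fin n) → ℝ)
    (hf : ∀ (k : ℕ) (x : EuclideanSpace ℝ (Fin n)),
      f k x = r k * h ((r k)⁻¹ • (x - s k)))
    (Einf : EuclideanSpace ℝ (Fin n) → ℝ)
    (hEinf : ∀ x : EuclideanSpace ℝ (Fin n), x ≠ sinf →
      Einf x = Real.exp (-1 / ‖x - sinf‖ ^ 2))
    (hEinf0 : Einf sinf = 0)
    (fN : ℕ → EuclideanSpace ℝ (Fin n) → ℝ)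
    (hfN : ∀ (N : ℕ) (x : EuclideanSpace ℝ (Fin n)),
      fN N x = Einf x * ∑ k ∈ Finset.range (N + 1), (4 : ℝ) ^ (-(k : ℤ)) * f k x)
    (F : EuclideanSpace ℝ (Fin n) → ℝ)
    (hF : ∀ x : EuclideanSpace ℝ (Fin n),
      F x = Einf x * ∑' k : ℕ, (4 : ℝ) ^ (-(k : ℤ)) * f k x) :
    (∀ (j : ℕ) (x : EuclideanSpace ℝ (Fin n)),
      F x = 0 → iteratedFDeriv ℝ j F x = 0) ∧
    (∀ (N j : ℕ) (x : EuclideanSpace ℝ (Fin n)),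
      fN N x = 0 → iteratedFDeriv ℝ j (fN N) x = 0) := by
  obtain ⟨hF_flat, hfN_flat⟩ := stmt_8_general h hsmooth hpos hzero sinf z hz s r hs hr f hf
    Einf hEinf hEinf0 fN hfN F hF
  exact ⟨fun j x hx => hF_flat x hx j, fun N j x hx => hfN_flat N x hx j⟩
end

section
/- If S satisfies the slice condition at x, then for every g ∈ G and every s ∈ S the stabilizer of y := g • s is conjugate to a subgroup of Stab(x): for every h ∈ Stab(g • s), one has g⁻¹ * h * g ∈ Stab(x). (This is property (5) of slices in Section 5 of the paper.) -/
open Pointwise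

theorem mem_stabilizer_smul_iff_conj_mem_stabilizer {G M : Type*} [Group G] [MulAction G M]
    {g h : G} {a : M} :
    h ∈ MulAction.stabilizer G (g • a) ↔ g⁻¹ * h * g ∈ MulAction.stabilizer G a := by
  rw [MulAction.stabilizer_smul_eq_stabilizer_map_conj, Subgroup.mem_map_equiv,
    MulAut.conj_symm_apply]

theorem smul_set_inter_self_nonempty_of_smul_eq {G M : Type*} [SMul G M]
    {k : G} {a : M} {S : Set M} (ha : a ∈ S) (hk : k • a = a) : (k • S ∩ S).Nonempty :=
  ⟨a, ⟨a, ha, hk⟩, ha⟩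

/-- Slice property (5): if `S` satisfies the slice condition at `x`, then for every `g ∈ G`
and `s ∈ S`, the stabilizer of `g • s` is conjugate (by `g`) to a subgroup of the
stabilizer of `x`. -/
theorem stmt_12 {G M : Type*} [Group G] [MulAction G M]
    (x : M) (S : Set M) (hxS : x ∈ S)
    (hslice : ∀ g : G, (g • S) ∩ S ≠ ∅ → g ∈ MulAction.stabilizer G x) :
    ∀ g : G, ∀ s ∈ S, ∀ h ∈ MulAction.stabilizer G (g • s),
      g⁻¹ * h * g ∈ MulAction.stabilizer G x := by
  intro g s hs h hh
  have hfix : (g⁻¹ * h * g) • s = s :=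
    MulAction.mem_stabilizer_iff.mp (mem_stabilizer_smul_iff_conj_mem_stabilizer.mp hh)
  exact hslice _ (smul_set_inter_self_nonempty_of_smul_eq hs hfix).ne_empty
end

section
/- Suppose in addition that M is a topological space, V is a type, χ : V → G is a map, and the set F := {χ(v) • s : v ∈ V, s ∈ S} is a neighborhood of x. If S satisfies the slice condition at x, then every point of the neighborhood F has stabilizer conjugate to a subgroup of Stab(x): for every y ∈ F there exists g ∈ G such that g⁻¹ * h * g ∈ Stab(x) for all h ∈ Stab(y). (This is the consequence of the slice properties (3)–(5) of Section 5 that is used to refute the existence of slices in Counter-examples 6 and 7: if in every neighborhood of x there are points whose stabilizer is not conjugate into Stab(x), then no slice at x exists.) -/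
open Pointwise

section

variable {G M : Type*} [Group G] [MulAction G M] {H : Subgroup G} {S : Set M} {s : M}

theorem stabilizer_le_of_forall_smul_inter_nonempty
    (hH : ∀ g : G, ((g • S) ∩ S).Nonempty → g ∈ H) (hs : s ∈ S) :
    MulAction.stabilizer G s ≤ H := by
  intro h hh
  have hs_mem : s ∈ h • S := ⟨s, hs, hh⟩
  exact hH h ⟨s, hs_mem, hs⟩

theorem stmt_13_general (hH : ∀ g : G, ((g • S) ∩ S).Nonempty → g ∈ H) (hs : s ∈ S) (g : G) :
    ∀ h ∈ MulAction.stabilizer G (g • s), g⁻¹ * h * g ∈ H := by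
  intro h hh
  have hconj : g⁻¹ * h * g ∈ MulAction.stabilizer G s := by
    rwa [MulAction.stabilizer_smul_eq_stabilizer_map_conj, Subgroup.mem_map_equiv,
      MulAut.conj_symm_apply] at hh
  exact stabilizer_le_of_forall_smul_inter_nonempty hH hs hconj

end

/-- If `S` satisfies the slice condition at `x` and `F = {χ v • s : v ∈ V, s ∈ S}` is a
neighborhood of `x`, then every point of `F` has stabilizer conjugate to a subgroup of
the stabilizer of `x`. -/
theorem stmt_13 {G M V : Type*} [Group G] [MulAction G M] [TopologicalSpace M]
    (x : M) (S : Set M) (hxS : x ∈ S)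
    (χ : V → G)
    (hF : {y : M | ∃ (v : V) (s : M), s ∈ S ∧ y = χ v • s} ∈ nhds x)
    (hslice : ∀ g : G, (g • S) ∩ S ≠ ∅ → g ∈ MulAction.stabilizer G x) :
    ∀ y ∈ {y : M | ∃ (v : V) (s : M), s ∈ S ∧ y = χ v • s},
      ∃ g : G, ∀ h ∈ MulAction.stabilizer G y,
        g⁻¹ * h * g ∈ MulAction.stabilizer G x := by
  rintro _ ⟨v, s, hs, rfl⟩
  exact ⟨χ v, stmt_13_general (fun g hg ↦ hslice g hg.ne_empty) hs (χ v)⟩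
end

section
/- Let λ ∈ ℝ be irrational, let Y be a Hausdorff topological space, and let F : T × T → Y be continuous with F(↑t, ↑(c + λ*t)) = F(↑0, ↑c) for all t, c ∈ ℝ (i.e. F is constant along every leaf of slope λ). Then F is constant on T × T. -/
/-!
Over a point `↑t` of the first circle, the leaf of slope `lam` through `(0, ↑c)` is the orbit of
`↑(c + lam * t)` under the rotation by the holonomy `lam * p`, where `p` is the length of the first
circle. For an irrational rotation every orbit is dense, so a single leaf is dense in the torus, and
a continuous map to a T₁ space that is constant on a dense set is constant.
-/

open Set

/-- The leaf of slope `lam` through `(0, ↑c)` in the torus whose factors are the circles of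
lengths `p` and `q`, as the set of points on the lifted line `t ↦ (t, c + lam * t)`. -/
def torusLeaf (p q lam c : ℝ) : Set (AddCircle p × AddCircle q) :=
  range fun t : ℝ ↦ ((t : AddCircle p), ((c + lam * t : ℝ) : AddCircle q))

theorem dense_of_forall_dense_preimage_prodMk {X Z : Type*} [TopologicalSpace X]
    [TopologicalSpace Z] {s : Set (X × Z)} (hs : ∀ x, Dense (Prod.mk x ⁻¹' s)) : Dense s :=
  fun (x, z) ↦ map_mem_closure (Continuous.prodMk_right x) (hs x z) fun _ hz ↦ hz

theorem denseRange_add_zsmul_addCircle {a q : ℝ} (ha : Irrational (a / q)) (b : AddCircle q) :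
    DenseRange fun n : ℤ ↦ b + n • (a : AddCircle q) :=
  (Homeomorph.addLeft b).surjective.denseRange.comp (AddCircle.denseRange_zsmul_coe_iff.2 ha)
    (Homeomorph.addLeft b).continuous

theorem mk_add_zsmul_mem_torusLeaf (p q lam c t : ℝ) (n : ℤ) :
    ((t : AddCircle p),
      ((c + lam * t : ℝ) : AddCircle q) + n • ((lam * p : ℝ) : AddCircle q)) ∈
        torusLeaf p q lam c := by
  refine ⟨t + n • p, Prod.ext ?_ ?_⟩
  · simp only [AddCircle.coe_add, AddCircle.coe_zsmul, AddCircle.coe_period, smul_zero, add_zero]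
  · rw [← AddCircle.coe_zsmul, ← AddCircle.coe_add, zsmul_eq_mul, zsmul_eq_mul]
    ring_nf

theorem dense_torusLeaf {p q lam : ℝ} (h : Irrational (lam * p / q)) (c : ℝ) :
    Dense (torusLeaf p q lam c) := by
  refine dense_of_forall_dense_preimage_prodMk fun x ↦ ?_
  obtain ⟨t, rfl⟩ := QuotientAddGroup.mk_surjective x
  exact (denseRange_add_zsmul_addCircle h _).mono
    (range_subset_iff.2 (mk_add_zsmul_mem_torusLeaf p q lam c t))

theorem stmt_15_general {p q lam : ℝ} (h : Irrational (lam * p / q))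
    {Y : Type*} [TopologicalSpace Y] [T1Space Y]
    {F : AddCircle p × AddCircle q → Y} (hF : Continuous F) {c : ℝ} {y : Y}
    (hleaf : ∀ t : ℝ, F ((t : AddCircle p), ((c + lam * t : ℝ) : AddCircle q)) = y)
    (x : AddCircle p × AddCircle q) : F x = y :=
  hF.continuousWithinAt.eq_const_of_mem_closure (dense_torusLeaf h c x)
    (forall_mem_range.2 hleaf)

/-- A continuous function on the torus which is constant along every leaf of an irrational
slope `λ` foliation is constant. -/
theorem stmt_15 (lam : ℝ) (hlam : Irrational lam)
    {Y : Type*} [TopologicalSpace Y] [T2Space Y]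
    (F : AddCircle (1 : ℝ) × AddCircle (1 : ℝ) → Y) (hF : Continuous F)
    (hleaf : ∀ t c : ℝ,
      F ((t : AddCircle (1 : ℝ)), ((c + lam * t : ℝ) : AddCircle (1 : ℝ))) =
        F (((0 : ℝ) : AddCircle (1 : ℝ)), (c : AddCircle (1 : ℝ)))) :
    ∀ p q : AddCircle (1 : ℝ) × AddCircle (1 : ℝ), F p = F q := by
  have constant := stmt_15_general (by simpa using hlam) hF (hleaf · 0)
  exact fun p q ↦ (constant p).trans (constant q).symm
end

section
/- Let λ ∈ ℝ be irrational and let ψ : T × T → T be continuous such that for every c ∈ ℝ there exists c' ∈ ℝ with ψ(↑t, ↑(c + λ*t)) = ↑(c' + λ*t) for all t ∈ ℝ (i.e. the fiber-preserving map (x,y) ↦ (x, ψ(x,y)) maps each leaf of slope λ into a leaf of slope λ). Then there exists a ∈ T such that ψ(x, y) = y + a for all (x, y) ∈ T × T. (This makes precise the paper's claim in Counter-example 7 that the isotropy group of the flat connection whose horizontal foliation has irrational slope λ equals S¹, the group of fiber rotations.) -/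
/-!
A leaf-preserving map moves all points of a leaf along the fiber by the same amount, so the
displacement `ψ (x, y) - y` is constant on leaves. When the holonomy is dense, each leaf meets each
fiber in a dense set; continuity at one point of a fiber makes the displacement constant on that
fiber, and hence everywhere, because every leaf meets it.
-/

theorem eq_of_continuousAt_of_dense_periods {G X : Type*} [AddGroup G] [TopologicalSpace G]
    [ContinuousAdd G] [TopologicalSpace X] [T1Space X] {S : Set G} (hS : Dense S)
    {f : G → X} (hf : ∀ s ∈ S, ∀ y, f (y + s) = f y) {y₀ : G} (hcont : ContinuousAt f y₀) (y : G) :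
    f y = f y₀ := by
  have orbit_dense : Dense ((y + ·) '' S) :=
    (add_left_surjective y).denseRange.dense_image (continuous_const_add y) hS
  have image_orbit : f '' ((y + ·) '' S) ⊆ {f y} := by
    rintro _ ⟨_, ⟨s, hs, rfl⟩, rfl⟩
    exact hf s hs y
  have mem_closure : f y₀ ∈ closure {f y} :=
    closure_mono image_orbit (mem_closure_image hcont (orbit_dense y₀))
  rw [closure_singleton] at mem_closure
  exact mem_closure.symm

section Leaves

variable {A B F : Type*} [AddCommGroup A] [AddCommGroup B] [AddCommGroup F]

/-- The fiber-preserving map `(x, y) ↦ (x, ψ (x, y))` of `B × F` sends leaves into leaves. The leaf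
through `(0, c)` is the set of all `(π t, c + φ t)`: the homomorphism `π` plays the role of the
universal covering of the base and `φ` that of parallel transport in the fiber. -/
def PreservesLeaves (π : A →+ B) (φ : A →+ F) (ψ : B × F → F) : Prop :=
  ∀ c, ∃ c', ∀ t, ψ (π t, c + φ t) = c' + φ t

/-- The holonomy group of the foliation of `B × F` by the leaves `{(π t, c + φ t)}`: the
translations of the fiber obtained by parallel transport along loops, which are the elements of
`π.ker`. -/
def holonomyGroup (π : A →+ B) (φ : A →+ F) : AddSubgroup F :=
  π.ker.map φ

namespace PreservesLeaves

variable {π : A →+ B} {φ : A →+ F} {ψ : B × F → F}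

theorem sub_eq_sub_along_leaf (h : PreservesLeaves π φ ψ) (s t : A) (y : F) :
    ψ (π (s + t), y + φ t) - (y + φ t) = ψ (π s, y) - y := by
  obtain ⟨c', hc'⟩ := h (y - φ s)
  have at_start : ψ (π s, y) = c' + φ s := by simpa using hc' s
  have at_end : ψ (π (s + t), y + φ t) = c' + φ s + φ t := by
    simpa [← add_assoc] using hc' (s + t)
  rw [at_start, at_end]
  abel

theorem sub_eq_sub_of_mem_holonomyGroup (h : PreservesLeaves π φ ψ)
    (hπ : Function.Surjective π) {k : F} (hk : k ∈ holonomyGroup π φ) (x : B) (y : F) :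
    ψ (x, y + k) - (y + k) = ψ (x, y) - y := by
  obtain ⟨s, rfl⟩ := hπ x
  obtain ⟨t, ht, rfl⟩ := hk
  have loop : π (s + t) = π s := by rw [map_add, AddMonoidHom.mem_ker.mp ht, add_zero]
  simpa only [loop] using h.sub_eq_sub_along_leaf s t y

theorem exists_eq_add_of_dense_holonomyGroup [TopologicalSpace F] [IsTopologicalAddGroup F]
    [T1Space F] (h : PreservesLeaves π φ ψ) (hπ : Function.Surjective π)
    (hdense : Dense (holonomyGroup π φ : Set F)) {x₀ : B} {y₀ : F}
    (hψ : ContinuousAt (fun y ↦ ψ (x₀, y)) y₀) :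
    ∃ a, ∀ x y, ψ (x, y) = y + a := by
  have const_on_fiber (y : F) : ψ (x₀, y) - y = ψ (x₀, y₀) - y₀ :=
    eq_of_continuousAt_of_dense_periods (f := fun y ↦ ψ (x₀, y) - y) hdense
      (fun _ hk ↦ h.sub_eq_sub_of_mem_holonomyGroup hπ hk x₀) (hψ.sub continuousAt_id) y
  refine ⟨ψ (x₀, y₀) - y₀, fun x y ↦ ?_⟩
  obtain ⟨s, rfl⟩ := hπ x
  obtain ⟨s₀, rfl⟩ := hπ x₀
  have const_on_leaf := h.sub_eq_sub_along_leaf s (s₀ - s) y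
  rw [add_sub_cancel, const_on_fiber] at const_on_leaf
  rw [const_on_leaf, add_sub_cancel]

end PreservesLeaves

end Leaves

section Torus

/-- The projection `ℝ → ℝ / pℤ` as a homomorphism, the universal covering of the base circle. -/
def circleProj (p : ℝ) : ℝ →+ AddCircle p :=
  QuotientAddGroup.mk' (AddSubgroup.zmultiples p)

/-- Parallel transport `t ↦ lam * t` in the fiber `ℝ / qℤ` for the flat connection of slope
`lam`. -/
def slopeTransport (lam q : ℝ) : ℝ →+ AddCircle q :=
  (circleProj q).comp (AddMonoidHom.mulLeft lam)

theorem holonomyGroup_slopeTransport (lam p q : ℝ) :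
    holonomyGroup (circleProj p) (slopeTransport lam q) =
      AddSubgroup.zmultiples ((lam * p : ℝ) : AddCircle q) := by
  rw [holonomyGroup, circleProj, QuotientAddGroup.ker_mk', AddMonoidHom.map_zmultiples]
  rfl

theorem dense_holonomyGroup_slopeTransport {lam p q : ℝ} (h : Irrational (lam * p / q)) :
    Dense (holonomyGroup (circleProj p) (slopeTransport lam q) : Set (AddCircle q)) := by
  rw [holonomyGroup_slopeTransport, AddSubgroup.coe_zmultiples]
  exact AddCircle.denseRange_zsmul_coe_iff.mpr h

theorem preservesLeaves_slopeTransport {lam p q : ℝ} {ψ : AddCircle p × AddCircle q → AddCircle q}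
    (hleaf : ∀ c : ℝ, ∃ c' : ℝ, ∀ t : ℝ,
      ψ ((t : AddCircle p), ((c + lam * t : ℝ) : AddCircle q)) =
        ((c' + lam * t : ℝ) : AddCircle q)) :
    PreservesLeaves (circleProj p) (slopeTransport lam q) ψ := by
  intro c
  obtain ⟨c, rfl⟩ := QuotientAddGroup.mk_surjective c
  obtain ⟨c', hc'⟩ := hleaf c
  exact ⟨c', hc'⟩

theorem stmt_16_general {lam p q : ℝ} (hlam : Irrational (lam * p / q))
    {ψ : AddCircle p × AddCircle q → AddCircle q} {x₀ : AddCircle p} {y₀ : AddCircle q}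
    (hψ : ContinuousAt (fun y ↦ ψ (x₀, y)) y₀)
    (hleaf : ∀ c : ℝ, ∃ c' : ℝ, ∀ t : ℝ,
      ψ ((t : AddCircle p), ((c + lam * t : ℝ) : AddCircle q)) =
        ((c' + lam * t : ℝ) : AddCircle q)) :
    ∃ a : AddCircle q, ∀ (x : AddCircle p) (y : AddCircle q), ψ (x, y) = y + a :=
  (preservesLeaves_slopeTransport hleaf).exists_eq_add_of_dense_holonomyGroup
    (QuotientAddGroup.mk'_surjective _) (dense_holonomyGroup_slopeTransport hlam) hψ

end Torus

/-- If a continuous fiber map `ψ` of the torus maps every leaf of irrational slope `λ`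
into a leaf of slope `λ`, then `ψ` is a rotation in the fiber: `ψ (x, y) = y + a`. -/
theorem stmt_16 (lam : ℝ) (hlam : Irrational lam)
    (ψ : AddCircle (1 : ℝ) × AddCircle (1 : ℝ) → AddCircle (1 : ℝ))
    (hψ : Continuous ψ)
    (hleaf : ∀ c : ℝ, ∃ c' : ℝ, ∀ t : ℝ,
      ψ ((t : AddCircle (1 : ℝ)), ((c + lam * t : ℝ) : AddCircle (1 : ℝ))) =
        ((c' + lam * t : ℝ) : AddCircle (1 : ℝ))) :
    ∃ a : AddCircle (1 : ℝ), ∀ x y : AddCircle (1 : ℝ), ψ (x, y) = y + a :=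
  stmt_16_general (by simpa using hlam) (hψ.comp (Continuous.prodMk_right 0)).continuousAt
    (y₀ := 0) hleaf
end
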